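/- Assume (A(t), B(t)) is totally controllable on [0,1]. Then for all t, s ∈ [0,1] with t ≠ s, the block Φ₁₂(t,s) is invertible; moreover, for all t, s ∈ ℝ, −Φ₁₁(t,s)⁻¹Φ₁₂(t,s) = Φ₁₂(s,t)Φ₂₂(s,t)⁻¹. -/

import Mathlib

/-!
The Hamiltonian matrix `M` is skew-adjoint for the symplectic form `J`, so `z₁ ⬝ J z₂` is constant
along any two solutions of `z' = M z`. Pairing a solution with the columns of `Φ(·,t)` therefore
shows that its value at one time determines its value at `t`.

Write `z = (x, y)`. Then `(x ⬝ y)' = -(|Bᵀ y|² + x ⬝ Q x) ≤ 0`, so if `x ⬝ y` vanishes at `s` and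
at `t`, then `Bᵀ y = 0` and `Q x = 0` between them, and there `(x, 0)` and `(0, y)` are solutions as
well. Hence `x` (and likewise `y`) vanishes at both of `s` and `t` or at neither, which makes `Φ₁₁`
and `Φ₂₂` invertible; the identity between the blocks is then read off `Φ(t,s) Φ(s,t) = 1`.

A kernel vector `v` of `Φ₁₂(t,s)` gives a solution with `x(s) = x(t) = 0` and `y(s) = v`.
Differentiating `Bᵀ y = 0` along `y' = -Aᵀ y` yields `Γ_kᵀ y = 0` for all `k < n`, so `y` vanishes
at a time between `s` and `t` where `Θₙ` has rank `n`; as `(0, y)` is a solution, `v = 0`.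
-/

open Matrix

/-- `IsSTM F Φ`: `Φ` is the state transition matrix of `F`, i.e. for each fixed `s`,
`t ↦ Φ t s` solves `X' = F t * X`, `X s = 1` (derivatives taken entrywise). -/
def IsSTM {ι : Type*} [Fintype ι] [DecidableEq ι] (F : ℝ → Matrix ι ι ℝ)
    (Φ : ℝ → ℝ → Matrix ι ι ℝ) : Prop :=
  (∀ s : ℝ, Φ s s = 1) ∧
  ∀ (s t : ℝ) (i j : ι), HasDerivAt (fun t' : ℝ => Φ t' s i j) ((F t * Φ t s) i j) t

/-- `IsCtrbMatSeq A B Γ`: `Γ 0 = B` and `Γ k = -A Γ (k-1) + Γ' (k-1)` for `1 ≤ k ≤ n`,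
i.e. the derivative of each entry of `Γ k` is the corresponding entry of `Γ (k+1) + A * Γ k`,
for `k < n`. -/
def IsCtrbMatSeq {n p : ℕ} (A : ℝ → Matrix (Fin n) (Fin n) ℝ)
    (B : ℝ → Matrix (Fin n) (Fin p) ℝ) (Γ : ℕ → ℝ → Matrix (Fin n) (Fin p) ℝ) : Prop :=
  Γ 0 = B ∧
  ∀ k < n, ∀ (t : ℝ) (i : Fin n) (j : Fin p),
    HasDerivAt (fun τ : ℝ => Γ k τ i j) ((Γ (k + 1) t + A t * Γ k t) i j) t

/-- The controllability matrix `Θₙ(t) = [Γ₀(t) Γ₁(t) ⋯ Γ_{n−1}(t)]`. -/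
def ctrbMat {n p : ℕ} (Γ : ℕ → ℝ → Matrix (Fin n) (Fin p) ℝ) (t : ℝ) :
    Matrix (Fin n) (Fin n × Fin p) ℝ :=
  Matrix.of fun i kj => Γ (kj.1 : ℕ) t i kj.2

/-- Total controllability of `(A(t), B(t))` on `[0,1]`. -/
def TotallyControllable {n p : ℕ} (Γ : ℕ → ℝ → Matrix (Fin n) (Fin p) ℝ) : Prop :=
  ∀ t₀ t₁ : ℝ, 0 ≤ t₀ → t₀ < t₁ → t₁ ≤ 1 →
    ∃ t ∈ Set.Ioo t₀ t₁, (ctrbMat Γ t).rank = n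

section Calculus

variable {S : Set ℝ} {t : ℝ}

lemma hasDerivWithinAt_dotProduct {ι : Type*} [Fintype ι] {u v : ℝ → ι → ℝ} {u' v' : ι → ℝ}
    (hu : HasDerivWithinAt u u' S t) (hv : HasDerivWithinAt v v' S t) :
    HasDerivWithinAt (fun τ => u τ ⬝ᵥ v τ) (u' ⬝ᵥ v t + u t ⬝ᵥ v') S t := by
  rw [hasDerivWithinAt_pi] at hu hv
  simpa only [dotProduct, ← Finset.sum_add_distrib] using
    HasDerivWithinAt.fun_sum (u := Finset.univ) fun i _ => (hu i).fun_mul (hv i)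

lemma hasDerivWithinAt_mulVec {ι κ : Type*} [Fintype ι] [Finite κ] (M : Matrix κ ι ℝ)
    {u : ℝ → ι → ℝ} {u' : ι → ℝ} (hu : HasDerivWithinAt u u' S t) :
    HasDerivWithinAt (fun τ => M *ᵥ u τ) (M *ᵥ u') S t := by
  cases nonempty_fintype κ
  exact M.mulVecLin.toContinuousLinearMap.hasFDerivAt.comp_hasDerivWithinAt t hu

lemma eq_of_hasDerivWithinAt_zero {E : Type*} [NormedAddCommGroup E] [NormedSpace ℝ E]
    {f : ℝ → E} (hS : Convex ℝ S) (hf : ∀ τ ∈ S, HasDerivWithinAt f 0 S τ) {s : ℝ}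
    (hs : s ∈ S) (ht : t ∈ S) : f s = f t := by
  simpa [sub_eq_zero] using
    hS.norm_image_sub_le_of_norm_hasDerivWithin_le hf (fun _ _ => norm_zero.le) ht hs

lemma eq_zero_of_hasDerivWithinAt_of_eqOn_zero {E : Type*} [NormedAddCommGroup E]
    [NormedSpace ℝ E] {f : ℝ → E} {f' : E} (hS : UniqueDiffWithinAt ℝ S t) (ht : t ∈ S)
    (hf : HasDerivWithinAt f f' S t) (h0 : ∀ τ ∈ S, f τ = 0) : f' = 0 :=
  hS.eq_deriv S hf ((hasDerivWithinAt_const t S 0).congr h0 (h0 t ht))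

end Calculus

section LinearAlgebra

variable {m n : Type*} [Fintype m] [Fintype n]

lemma eq_zero_of_vecMul_eq_zero_of_rank_eq_card {K : Type*} [Field K] {M : Matrix m n K}
    (hM : M.rank = Fintype.card m) {y : m → K} (hy : y ᵥ* M = 0) : y = 0 := by
  have hli : LinearIndependent K M.row := by
    rw [linearIndependent_iff_card_eq_finrank_span, Set.finrank, ← rank_eq_finrank_span_row, hM]
  exact vecMul_injective_iff.2 hli (hy.trans (zero_vecMul M).symm)

lemma isUnit_of_forall_mulVec_eq_zero {K : Type*} [Field K] [DecidableEq n] {M : Matrix n n K}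
    (hM : ∀ v, M *ᵥ v = 0 → v = 0) : IsUnit M :=
  mulVec_injective_iff_isUnit.1 ((injective_iff_map_eq_zero M.mulVecLin).2 hM)

lemma mulVec_sumElim {k l R : Type*} [NonUnitalNonAssocSemiring R]
    (M : Matrix (k ⊕ l) (m ⊕ n) R) (u : m → R) (v : n → R) :
    M *ᵥ Sum.elim u v =
      Sum.elim (M.toBlocks₁₁ *ᵥ u + M.toBlocks₁₂ *ᵥ v) (M.toBlocks₂₁ *ᵥ u + M.toBlocks₂₂ *ᵥ v) := by
  conv_lhs => rw [← fromBlocks_toBlocks M]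
  simp [fromBlocks_mulVec]

lemma neg_inv_toBlocks₁₁_mul_toBlocks₁₂ {R : Type*} [CommRing R] [DecidableEq m] [DecidableEq n]
    {M N : Matrix (m ⊕ n) (m ⊕ n) R} (hMN : M * N = 1)
    (hM : IsUnit M.toBlocks₁₁) (hN : IsUnit N.toBlocks₂₂) :
    -(M.toBlocks₁₁⁻¹ * M.toBlocks₁₂) = N.toBlocks₁₂ * N.toBlocks₂₂⁻¹ := by
  have h12 : M.toBlocks₁₁ * N.toBlocks₁₂ + M.toBlocks₁₂ * N.toBlocks₂₂ = 0 := by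
    rw [← fromBlocks_toBlocks M, ← fromBlocks_toBlocks N, fromBlocks_multiply,
      ← fromBlocks_one] at hMN
    exact (fromBlocks_inj.1 hMN).2.1
  rw [isUnit_iff_isUnit_det] at hM hN
  calc -(M.toBlocks₁₁⁻¹ * M.toBlocks₁₂)
      = M.toBlocks₁₁⁻¹ * -(M.toBlocks₁₂ * N.toBlocks₂₂) * N.toBlocks₂₂⁻¹ := by
        rw [Matrix.mul_neg, Matrix.neg_mul, Matrix.mul_assoc, mul_nonsing_inv_cancel_right _ _ hN]
    _ = N.toBlocks₁₂ * N.toBlocks₂₂⁻¹ := by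
        rw [← eq_neg_of_add_eq_zero_left h12, nonsing_inv_mul_cancel_left _ _ hM]

end LinearAlgebra

section LinearODE

variable {ι : Type*} [Fintype ι] {F : ℝ → Matrix ι ι ℝ} {J : Matrix ι ι ℝ} {S : Set ℝ}
  {y z : ℝ → ι → ℝ} {s t : ℝ}

lemma dotProduct_mulVec_eq_of_isSkewAdjoint (hJ : ∀ t, J.IsSkewAdjoint (F t)) (hS : Convex ℝ S)
    (hy : IsIntegralCurveOn y (fun t v => F t *ᵥ v) S)
    (hz : IsIntegralCurveOn z (fun t v => F t *ᵥ v) S) (hs : s ∈ S) (ht : t ∈ S) :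
    y s ⬝ᵥ J *ᵥ z s = y t ⬝ᵥ J *ᵥ z t := by
  refine eq_of_hasDerivWithinAt_zero (f := fun τ => y τ ⬝ᵥ J *ᵥ z τ) hS (fun τ hτ => ?_) hs ht
  refine (hasDerivWithinAt_dotProduct (hy τ hτ)
    (hasDerivWithinAt_mulVec J (hz τ hτ))).congr_deriv ?_
  have hskew : (F τ)ᵀ * J = J * -F τ := hJ τ
  have hmove : (F τ *ᵥ y τ) ⬝ᵥ J *ᵥ z τ = y τ ⬝ᵥ ((F τ)ᵀ * J) *ᵥ z τ := by
    rw [← mulVec_mulVec, dotProduct_mulVec (y τ), vecMul_transpose]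
  rw [hmove, hskew, mulVec_mulVec, Matrix.mul_neg, neg_mulVec, dotProduct_neg, neg_add_cancel]

variable [DecidableEq ι] {Φ : ℝ → ℝ → Matrix ι ι ℝ}

lemma IsSTM.isIntegralCurve_mulVec (hΦ : IsSTM F Φ) (s : ℝ) (w : ι → ℝ) :
    IsIntegralCurve (fun t => Φ t s *ᵥ w) (fun t v => F t *ᵥ v) := by
  intro t
  have hderiv : HasDerivAt (fun τ => Φ τ s *ᵥ w) ((F t * Φ t s) *ᵥ w) t := hasDerivAt_pi.2 fun i =>
    HasDerivAt.fun_sum (u := Finset.univ) fun j _ => (hΦ.2 s t i j).mul_const (w j)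
  simpa only [mulVec_mulVec] using hderiv

lemma IsSTM.eq_zero_of_isSkewAdjoint (hΦ : IsSTM F Φ) (hJ : ∀ t, J.IsSkewAdjoint (F t))
    (hJ' : J.Nondegenerate) (hS : Convex ℝ S) (hz : IsIntegralCurveOn z (fun t v => F t *ᵥ v) S)
    (hs : s ∈ S) (hzs : z s = 0) (ht : t ∈ S) : z t = 0 := by
  refine hJ'.eq_zero_of_ortho' fun w => ?_
  have hconst := dotProduct_mulVec_eq_of_isSkewAdjoint hJ hS
    ((hΦ.isIntegralCurve_mulVec t w).isIntegralCurveOn S) hz hs ht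
  simpa [hΦ.1, hzs] using hconst.symm

lemma IsSTM.mul_of_isSkewAdjoint (hΦ : IsSTM F Φ) (hJ : ∀ t, J.IsSkewAdjoint (F t))
    (hJ' : J.Nondegenerate) (t s r : ℝ) : Φ t s * Φ s r = Φ t r := by
  refine ext_of_mulVec_single fun i => ?_
  set w : ι → ℝ := Pi.single i 1
  have hz : IsIntegralCurveOn (fun τ => Φ τ s *ᵥ Φ s r *ᵥ w - Φ τ r *ᵥ w)
      (fun t v => F t *ᵥ v) Set.univ := fun τ _ => by
    simpa only [mulVec_sub] using ((hΦ.isIntegralCurve_mulVec s (Φ s r *ᵥ w) τ).fun_sub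
      (hΦ.isIntegralCurve_mulVec r w τ)).hasDerivWithinAt
  have hzt := hΦ.eq_zero_of_isSkewAdjoint hJ hJ' convex_univ hz (Set.mem_univ s)
    (by simp [hΦ.1]) (Set.mem_univ t)
  rw [← mulVec_mulVec]
  exact sub_eq_zero.1 hzt

end LinearODE

section Hamiltonian

variable {ι κ : Type*}

lemma nondegenerate_J [Finite ι] [DecidableEq ι] : (J ι ℝ).Nondegenerate := by
  cases nonempty_fintype ι
  exact nondegenerate_of_det_ne_zero (isUnit_det_J ι ℝ).ne_zero

variable [Fintype κ]

/-- The Hamiltonian matrix of the linear-quadratic problem with dynamics `(A, B)` and state cost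
`Q`. -/
def hamiltonianMatrix (A Q : Matrix ι ι ℝ) (B : Matrix ι κ ℝ) : Matrix (ι ⊕ ι) (ι ⊕ ι) ℝ :=
  fromBlocks A (-(B * Bᵀ)) (-Q) (-Aᵀ)

variable [Fintype ι]

lemma isSkewAdjoint_J_hamiltonianMatrix [DecidableEq ι] (A : Matrix ι ι ℝ) {Q : Matrix ι ι ℝ}
    (hQ : Q.IsSymm) (B : Matrix ι κ ℝ) : (J ι ℝ).IsSkewAdjoint (hamiltonianMatrix A Q B) := by
  simp [Matrix.IsSkewAdjoint, Matrix.IsAdjointPair, hamiltonianMatrix, J, fromBlocks_transpose,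
    fromBlocks_multiply, fromBlocks_neg, hQ.eq]

/-- State and costate trajectories `x`, `y` of the Hamiltonian system on a set `S` of times;
derivatives are taken within `S`. -/
structure IsHamiltonianTrajOn (A Q : ℝ → Matrix ι ι ℝ) (B : ℝ → Matrix ι κ ℝ) (x y : ℝ → ι → ℝ)
    (S : Set ℝ) : Prop where
  state : ∀ t ∈ S, HasDerivWithinAt x (A t *ᵥ x t - B t *ᵥ (B t)ᵀ *ᵥ y t) S t
  costate : ∀ t ∈ S, HasDerivWithinAt y (-(Q t *ᵥ x t) - (A t)ᵀ *ᵥ y t) S t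

variable {A Q : ℝ → Matrix ι ι ℝ} {B : ℝ → Matrix ι κ ℝ} {x y : ℝ → ι → ℝ} {S : Set ℝ}
  {s t τ : ℝ}

lemma isHamiltonianTrajOn_iff_isIntegralCurveOn :
    IsHamiltonianTrajOn A Q B x y S ↔
      IsIntegralCurveOn (fun t => Sum.elim (x t) (y t))
        (fun t v => hamiltonianMatrix (A t) (Q t) (B t) *ᵥ v) S := by
  have hfield (t : ℝ) : hamiltonianMatrix (A t) (Q t) (B t) *ᵥ Sum.elim (x t) (y t) =
      Sum.elim (A t *ᵥ x t - B t *ᵥ (B t)ᵀ *ᵥ y t) (-(Q t *ᵥ x t) - (A t)ᵀ *ᵥ y t) := by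
    simp [hamiltonianMatrix, fromBlocks_mulVec, sub_eq_add_neg, neg_mulVec]
  have hsplit (t : ℝ) : HasDerivWithinAt (fun t => Sum.elim (x t) (y t))
      (hamiltonianMatrix (A t) (Q t) (B t) *ᵥ Sum.elim (x t) (y t)) S t ↔
        HasDerivWithinAt x (A t *ᵥ x t - B t *ᵥ (B t)ᵀ *ᵥ y t) S t ∧
          HasDerivWithinAt y (-(Q t *ᵥ x t) - (A t)ᵀ *ᵥ y t) S t := by
    simp only [hfield, hasDerivWithinAt_pi, Sum.forall, Sum.elim_inl, Sum.elim_inr]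
  simp only [IsIntegralCurveOn, hsplit]
  exact ⟨fun h t ht => ⟨h.state t ht, h.costate t ht⟩,
    fun h => ⟨fun t ht => (h t ht).1, fun t ht => (h t ht).2⟩⟩

namespace IsHamiltonianTrajOn

lemma hasDerivWithinAt_dotProduct (h : IsHamiltonianTrajOn A Q B x y S) (ht : t ∈ S) :
    HasDerivWithinAt (fun τ => x τ ⬝ᵥ y τ)
      (-((B t)ᵀ *ᵥ y t ⬝ᵥ (B t)ᵀ *ᵥ y t + x t ⬝ᵥ Q t *ᵥ x t)) S t := by
  convert _root_.hasDerivWithinAt_dotProduct (h.state t ht) (h.costate t ht) using 1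
  have hA : A t *ᵥ x t ⬝ᵥ y t = x t ⬝ᵥ (A t)ᵀ *ᵥ y t := by
    rw [dotProduct_mulVec, vecMul_transpose]
  have hB : B t *ᵥ (B t)ᵀ *ᵥ y t ⬝ᵥ y t = (B t)ᵀ *ᵥ y t ⬝ᵥ (B t)ᵀ *ᵥ y t := by
    rw [dotProduct_mulVec ((B t)ᵀ *ᵥ y t), vecMul_transpose]
  rw [sub_dotProduct, dotProduct_sub, dotProduct_neg, hA, hB]
  ring

lemma dotProduct_eq_zero (h : IsHamiltonianTrajOn A Q B x y (Set.uIcc s t))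
    (hQ : ∀ t, (Q t).PosSemidef) (hs : x s ⬝ᵥ y s = 0) (ht : x t ⬝ᵥ y t = 0)
    (hτ : τ ∈ Set.uIcc s t) : x τ ⬝ᵥ y τ = 0 := by
  wlog hst : s ≤ t generalizing s t
  · rw [Set.uIcc_comm] at h hτ
    exact this h ht hs hτ (le_of_not_ge hst)
  have hanti : AntitoneOn (fun r => x r ⬝ᵥ y r) (Set.uIcc s t) := by
    refine antitoneOn_of_hasDerivWithinAt_nonpos (convex_uIcc s t)
      (fun r hr => (h.hasDerivWithinAt_dotProduct hr).continuousWithinAt)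
      (fun r hr => (h.hasDerivWithinAt_dotProduct (interior_subset hr)).mono interior_subset)
      fun r _ => neg_nonpos.2 (add_nonneg ?_ ?_)
    · simpa using dotProduct_star_self_nonneg ((B r)ᵀ *ᵥ y r)
    · simpa using (hQ r).dotProduct_mulVec_nonneg (x r)
  have hτ' : τ ∈ Set.Icc s t := Set.uIcc_of_le hst ▸ hτ
  exact le_antisymm (hs ▸ hanti Set.left_mem_uIcc hτ hτ'.1)
    (ht ▸ hanti hτ Set.right_mem_uIcc hτ'.2)

lemma mulVec_eq_zero (h : IsHamiltonianTrajOn A Q B x y (Set.uIcc s t))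
    (hQ : ∀ t, (Q t).PosSemidef) (hst : s ≠ t) (hs : x s ⬝ᵥ y s = 0) (ht : x t ⬝ᵥ y t = 0)
    (hτ : τ ∈ Set.uIcc s t) : (B τ)ᵀ *ᵥ y τ = 0 ∧ Q τ *ᵥ x τ = 0 := by
  have hderiv := eq_zero_of_hasDerivWithinAt_of_eqOn_zero (uniqueDiffOn_uIcc hst τ hτ) hτ
    (h.hasDerivWithinAt_dotProduct hτ) fun _ hr => h.dotProduct_eq_zero hQ hs ht hr
  have hB : 0 ≤ (B τ)ᵀ *ᵥ y τ ⬝ᵥ (B τ)ᵀ *ᵥ y τ := by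
    simpa using dotProduct_star_self_nonneg ((B τ)ᵀ *ᵥ y τ)
  have hQx : 0 ≤ x τ ⬝ᵥ Q τ *ᵥ x τ := by simpa using (hQ τ).dotProduct_mulVec_nonneg (x τ)
  refine ⟨dotProduct_self_eq_zero.1 (by linarith), ?_⟩
  rw [← (hQ τ).dotProduct_mulVec_zero_iff, star_trivial]
  linarith

lemma with_costate_zero (h : IsHamiltonianTrajOn A Q B x y S)
    (hdeg : ∀ t ∈ S, (B t)ᵀ *ᵥ y t = 0 ∧ Q t *ᵥ x t = 0) : IsHamiltonianTrajOn A Q B x 0 S where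
  state t ht := by simpa [(hdeg t ht).1] using h.state t ht
  costate t ht := by simp [(hdeg t ht).2, hasDerivWithinAt_zero]

lemma with_state_zero (h : IsHamiltonianTrajOn A Q B x y S)
    (hdeg : ∀ t ∈ S, (B t)ᵀ *ᵥ y t = 0 ∧ Q t *ᵥ x t = 0) : IsHamiltonianTrajOn A Q B 0 y S where
  state t ht := by simp [(hdeg t ht).1, hasDerivWithinAt_zero]
  costate t ht := by simpa [(hdeg t ht).2] using h.costate t ht

variable [DecidableEq ι] {Φ : ℝ → ℝ → Matrix (ι ⊕ ι) (ι ⊕ ι) ℝ}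

lemma eq_zero_of_eq_zero_at (h : IsHamiltonianTrajOn A Q B x y S)
    (hΦ : IsSTM (fun t => hamiltonianMatrix (A t) (Q t) (B t)) Φ) (hQ : ∀ t, (Q t).IsSymm)
    (hS : Convex ℝ S) (hs : s ∈ S) (hxs : x s = 0) (hys : y s = 0) (ht : t ∈ S) :
    x t = 0 ∧ y t = 0 := by
  have hz := hΦ.eq_zero_of_isSkewAdjoint (fun t => isSkewAdjoint_J_hamiltonianMatrix _ (hQ t) _)
    nondegenerate_J hS (isHamiltonianTrajOn_iff_isIntegralCurveOn.1 h) hs (by simp [hxs, hys]) ht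
  exact ⟨congrArg (· ∘ Sum.inl) hz, congrArg (· ∘ Sum.inr) hz⟩

lemma state_eq_zero (h : IsHamiltonianTrajOn A Q B x y (Set.uIcc s t))
    (hΦ : IsSTM (fun t => hamiltonianMatrix (A t) (Q t) (B t)) Φ) (hQ : ∀ t, (Q t).PosSemidef)
    (hst : s ≠ t) (hs : x s ⬝ᵥ y s = 0) (ht : x t = 0) : x s = 0 :=
  have hx := h.with_costate_zero fun _ => h.mulVec_eq_zero hQ hst hs (by simp [ht])
  (hx.eq_zero_of_eq_zero_at hΦ (fun t => (hQ t).isHermitian) (convex_uIcc s t)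
    Set.right_mem_uIcc ht rfl Set.left_mem_uIcc).1

lemma costate_eq_zero (h : IsHamiltonianTrajOn A Q B x y (Set.uIcc s t))
    (hΦ : IsSTM (fun t => hamiltonianMatrix (A t) (Q t) (B t)) Φ) (hQ : ∀ t, (Q t).PosSemidef)
    (hst : s ≠ t) (hs : x s ⬝ᵥ y s = 0) (ht : x t ⬝ᵥ y t = 0) (hτ : τ ∈ Set.uIcc s t)
    (hyτ : y τ = 0) : y s = 0 :=
  have hy := h.with_state_zero fun _ => h.mulVec_eq_zero hQ hst hs ht
  (hy.eq_zero_of_eq_zero_at hΦ (fun t => (hQ t).isHermitian) (convex_uIcc s t)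
    hτ rfl hyτ Set.left_mem_uIcc).2

end IsHamiltonianTrajOn

namespace IsSTM

variable [DecidableEq ι] {Φ : ℝ → ℝ → Matrix (ι ⊕ ι) (ι ⊕ ι) ℝ}

lemma isHamiltonianTrajOn (hΦ : IsSTM (fun t => hamiltonianMatrix (A t) (Q t) (B t)) Φ)
    (s : ℝ) (u v : ι → ℝ) (S : Set ℝ) :
    IsHamiltonianTrajOn A Q B (fun t => (Φ t s).toBlocks₁₁ *ᵥ u + (Φ t s).toBlocks₁₂ *ᵥ v)
      (fun t => (Φ t s).toBlocks₂₁ *ᵥ u + (Φ t s).toBlocks₂₂ *ᵥ v) S := by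
  rw [isHamiltonianTrajOn_iff_isIntegralCurveOn]
  simpa only [mulVec_sumElim] using
    (hΦ.isIntegralCurve_mulVec s (Sum.elim u v)).isIntegralCurveOn S

lemma toBlocks_self {F : ℝ → Matrix (ι ⊕ ι) (ι ⊕ ι) ℝ} (hΦ : IsSTM F Φ) (s : ℝ) :
    (Φ s s).toBlocks₁₁ = 1 ∧ (Φ s s).toBlocks₁₂ = 0 ∧ (Φ s s).toBlocks₂₁ = 0 ∧
      (Φ s s).toBlocks₂₂ = 1 := by
  simp [hΦ.1, ← fromBlocks_one]

lemma isUnit_toBlocks₁₁ (hΦ : IsSTM (fun t => hamiltonianMatrix (A t) (Q t) (B t)) Φ)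
    (hQ : ∀ t, (Q t).PosSemidef) (t s : ℝ) : IsUnit (Φ t s).toBlocks₁₁ := by
  obtain ⟨h11, -, h21, -⟩ := hΦ.toBlocks_self s
  refine isUnit_of_forall_mulVec_eq_zero fun v hv => ?_
  rcases eq_or_ne s t with rfl | hst
  · simpa [h11] using hv
  · simpa [h11] using (hΦ.isHamiltonianTrajOn s v 0 (Set.uIcc s t)).state_eq_zero hΦ hQ hst
      (by simp [h21]) (by simp [hv])

lemma isUnit_toBlocks₂₂ (hΦ : IsSTM (fun t => hamiltonianMatrix (A t) (Q t) (B t)) Φ)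
    (hQ : ∀ t, (Q t).PosSemidef) (t s : ℝ) : IsUnit (Φ t s).toBlocks₂₂ := by
  obtain ⟨-, h12, -, h22⟩ := hΦ.toBlocks_self s
  refine isUnit_of_forall_mulVec_eq_zero fun v hv => ?_
  rcases eq_or_ne s t with rfl | hst
  · simpa [h22] using hv
  · simpa [h22] using (hΦ.isHamiltonianTrajOn s 0 v (Set.uIcc s t)).costate_eq_zero hΦ hQ hst
      (by simp [h12]) (by simp [hv]) Set.right_mem_uIcc (by simp [hv])

end IsSTM

end Hamiltonian

section Controllability

variable {n p : ℕ} {A Q : ℝ → Matrix (Fin n) (Fin n) ℝ} {B : ℝ → Matrix (Fin n) (Fin p) ℝ}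
  {Γ : ℕ → ℝ → Matrix (Fin n) (Fin p) ℝ} {y : ℝ → Fin n → ℝ} {S : Set ℝ} {s t τ : ℝ}

lemma IsCtrbMatSeq.hasDerivWithinAt_vecMul (hΓ : IsCtrbMatSeq A B Γ) {k : ℕ} (hk : k < n)
    (hy : HasDerivWithinAt y (-((A t)ᵀ *ᵥ y t)) S t) :
    HasDerivWithinAt (fun τ => y τ ᵥ* Γ k τ) (y t ᵥ* Γ (k + 1) t) S t := by
  rw [hasDerivWithinAt_pi]
  intro j
  have hcol : HasDerivWithinAt (fun τ i => Γ k τ i j)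
      (fun i => (Γ (k + 1) t + A t * Γ k t) i j) S t :=
    hasDerivWithinAt_pi.2 fun i => (hΓ.2 k hk t i j).hasDerivWithinAt
  refine (hasDerivWithinAt_dotProduct hy hcol).congr_deriv ?_
  calc -((A t)ᵀ *ᵥ y t) ⬝ᵥ (fun i => Γ k t i j)
        + y t ⬝ᵥ (fun i => (Γ (k + 1) t + A t * Γ k t) i j)
      = (-(y t ᵥ* A t ᵥ* Γ k t) + y t ᵥ* (Γ (k + 1) t + A t * Γ k t)) j := by
        rw [mulVec_transpose, ← neg_vecMul (y t ᵥ* A t)]; rfl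
    _ = (y t ᵥ* Γ (k + 1) t) j := by
        rw [vecMul_vecMul, vecMul_add, neg_add_cancel_comm_assoc]

lemma IsCtrbMatSeq.vecMul_eq_zero (hΓ : IsCtrbMatSeq A B Γ) (hS : UniqueDiffOn ℝ S)
    (hy : ∀ t ∈ S, HasDerivWithinAt y (-((A t)ᵀ *ᵥ y t)) S t)
    (hB : ∀ t ∈ S, y t ᵥ* B t = 0) {k : ℕ} (hk : k ≤ n) (ht : t ∈ S) : y t ᵥ* Γ k t = 0 := by
  induction k generalizing t with
  | zero => simpa only [hΓ.1] using hB t ht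
  | succ k ih =>
    exact eq_zero_of_hasDerivWithinAt_of_eqOn_zero (hS t ht) ht
      (hΓ.hasDerivWithinAt_vecMul hk (hy t ht)) fun _ => ih (Nat.le_of_succ_le hk)

lemma eq_zero_of_rank_ctrbMat {v : Fin n → ℝ} (hrank : (ctrbMat Γ t).rank = n)
    (hv : ∀ k < n, v ᵥ* Γ k t = 0) : v = 0 :=
  eq_zero_of_vecMul_eq_zero_of_rank_eq_card (hrank.trans (Fintype.card_fin n).symm)
    (funext fun kj => congrFun (hv kj.1 kj.1.2) kj.2)

variable {Φ : ℝ → ℝ → Matrix (Fin n ⊕ Fin n) (Fin n ⊕ Fin n) ℝ}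

lemma IsSTM.isUnit_toBlocks₁₂ (hΦ : IsSTM (fun t => hamiltonianMatrix (A t) (Q t) (B t)) Φ)
    (hQ : ∀ t, (Q t).PosSemidef) (hΓ : IsCtrbMatSeq A B Γ) (hst : s ≠ t)
    (hτ : τ ∈ Set.uIcc s t) (hrank : (ctrbMat Γ τ).rank = n) : IsUnit (Φ t s).toBlocks₁₂ := by
  obtain ⟨-, h12, -, h22⟩ := hΦ.toBlocks_self s
  refine isUnit_of_forall_mulVec_eq_zero fun v hv => ?_
  have htraj := hΦ.isHamiltonianTrajOn s 0 v (Set.uIcc s t)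
  set x := fun r => (Φ r s).toBlocks₁₁ *ᵥ 0 + (Φ r s).toBlocks₁₂ *ᵥ v
  set y := fun r => (Φ r s).toBlocks₂₁ *ᵥ 0 + (Φ r s).toBlocks₂₂ *ᵥ v
  have hs : x s ⬝ᵥ y s = 0 := by simp [x, h12]
  have ht : x t ⬝ᵥ y t = 0 := by simp [x, hv]
  have hdeg (r) (hr : r ∈ Set.uIcc s t) : (B r)ᵀ *ᵥ y r = 0 ∧ Q r *ᵥ x r = 0 :=
    htraj.mulVec_eq_zero hQ hst hs ht hr
  have horth (k) (hk : k < n) : y τ ᵥ* Γ k τ = 0 :=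
    hΓ.vecMul_eq_zero (uniqueDiffOn_uIcc hst)
      (fun r hr => by simpa [(hdeg r hr).2] using htraj.costate r hr)
      (fun r hr => by rw [← mulVec_transpose, (hdeg r hr).1]) hk.le hτ
  have hys : y s = 0 :=
    htraj.costate_eq_zero hΦ hQ hst hs ht hτ (eq_zero_of_rank_ctrbMat hrank horth)
  simpa [y, h22] using hys

lemma TotallyControllable.exists_mem_uIcc (hTC : TotallyControllable Γ)
    (hs : s ∈ Set.Icc (0 : ℝ) 1) (ht : t ∈ Set.Icc (0 : ℝ) 1) (hst : s ≠ t) :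
    ∃ τ ∈ Set.uIcc s t, (ctrbMat Γ τ).rank = n := by
  obtain ⟨τ, hτ, hrank⟩ := hTC (min s t) (max s t) (le_min hs.1 ht.1) (min_lt_max.2 hst)
    (max_le hs.2 ht.2)
  exact ⟨τ, Set.Ioo_subset_Icc_self hτ, hrank⟩

end Controllability

theorem stmt_4_general {n p : ℕ} {A Q : ℝ → Matrix (Fin n) (Fin n) ℝ}
    {B : ℝ → Matrix (Fin n) (Fin p) ℝ} (hQ : ∀ t, (Q t).PosSemidef)
    {Γ : ℕ → ℝ → Matrix (Fin n) (Fin p) ℝ} (hΓ : IsCtrbMatSeq A B Γ) (hTC : TotallyControllable Γ)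
    {Φ : ℝ → ℝ → Matrix (Fin n ⊕ Fin n) (Fin n ⊕ Fin n) ℝ}
    (hΦ : IsSTM (fun t => hamiltonianMatrix (A t) (Q t) (B t)) Φ) :
    (∀ t ∈ Set.Icc (0 : ℝ) 1, ∀ s ∈ Set.Icc (0 : ℝ) 1, t ≠ s → IsUnit (Φ t s).toBlocks₁₂) ∧
      ∀ t s : ℝ, IsUnit (Φ t s).toBlocks₁₁ ∧ IsUnit (Φ s t).toBlocks₂₂ ∧
        -((Φ t s).toBlocks₁₁⁻¹ * (Φ t s).toBlocks₁₂) =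
          (Φ s t).toBlocks₁₂ * (Φ s t).toBlocks₂₂⁻¹ := by
  constructor
  · intro t ht s hs hts
    obtain ⟨τ, hτ, hrank⟩ := hTC.exists_mem_uIcc hs ht hts.symm
    exact hΦ.isUnit_toBlocks₁₂ hQ hΓ hts.symm hτ hrank
  · intro t s
    have h11 := hΦ.isUnit_toBlocks₁₁ hQ t s
    have h22 := hΦ.isUnit_toBlocks₂₂ hQ s t
    have hinv : Φ t s * Φ s t = 1 := by
      rw [hΦ.mul_of_isSkewAdjoint (fun r => isSkewAdjoint_J_hamiltonianMatrix _
        (hQ r).isHermitian _) nondegenerate_J, hΦ.1]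
    exact ⟨h11, h22, neg_inv_toBlocks₁₁_mul_toBlocks₁₂ hinv h11 h22⟩

theorem stmt_4 {n p : ℕ} (hn : 1 ≤ n) (hp : 1 ≤ p)
    (A Q : ℝ → Matrix (Fin n) (Fin n) ℝ) (B : ℝ → Matrix (Fin n) (Fin p) ℝ)
    (hA : Continuous A) (hB : Continuous B) (hQ : Continuous Q)
    (hQpsd : ∀ t, (Q t).PosSemidef)
    (hAsm : ∀ i j, ContDiff ℝ (n - 1 : ℕ) fun t => A t i j)
    (hBsm : ∀ i j, ContDiff ℝ (n : ℕ) fun t => B t i j)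
    (Γ : ℕ → ℝ → Matrix (Fin n) (Fin p) ℝ)
    (hΓ : IsCtrbMatSeq A B Γ)
    (hTC : TotallyControllable Γ)
    (Φ : ℝ → ℝ → Matrix (Fin n ⊕ Fin n) (Fin n ⊕ Fin n) ℝ)
    (hΦ : IsSTM (fun t => fromBlocks (A t) (-(B t * (B t)ᵀ)) (-(Q t)) (-(A t)ᵀ)) Φ) :
    (∀ t ∈ Set.Icc (0:ℝ) 1, ∀ s ∈ Set.Icc (0:ℝ) 1, t ≠ s → IsUnit ((Φ t s).toBlocks₁₂)) ∧
    ∀ t s : ℝ,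
      -(((Φ t s).toBlocks₁₁)⁻¹ * (Φ t s).toBlocks₁₂) =
        (Φ s t).toBlocks₁₂ * ((Φ s t).toBlocks₂₂)⁻¹ := by
  have hblocks := stmt_4_general hQpsd hΓ hTC hΦ
  exact ⟨hblocks.1, fun t s => (hblocks.2 t s).2.2⟩
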